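/- Enabled uncontrollable transitions are always known to be safe: if t ∈ π for a process π, t is uncontrollable (t ∈ uc(T)), s ∈ G and (s,t) ∈ R, then π weakly knows at s that t is allowed by the safe transition relation; that is, for every state s' ∈ G with s' ≡^w_π s (equal local information s' ∩ ngb(π) = s ∩ ngb(π)), we have (s',t) ∈ R. -/

import Mathlib

/-!
A good state is never in the attractor, since `I_G`-steps avoid it. Whether `t ∈ π` is enabled
depends only on the places in `ngb(π)`, so `t` is enabled at every good `s'` with the same local
information as `s` (`enabled_of_locInfo_eq`). As `t` is uncontrollable and `s'` lies outside the
attractor, `(s', t) ∈ I` and firing `t` does not lead into the attractor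
(`mem_IG_of_uncontrollable`). Hence `(s', t) ∈ I_G`, and the successor is good because a finite
restricted run can always be extended to a maximal one (`fire_mem_reachRestr`).
-/

open Set

/-- A 1-safe Petri net: places `P`, transitions `T`, the flow relation
`E ⊆ (P×T) ∪ (T×P)` (split into its two components), and an initial state
`s0 ⊆ P`.  States are subsets of `P`. -/
structure PetriNet (P T : Type) where
  flowPT : Set (P × T)
  flowTP : Set (T × P)
  s0 : Set P

/-- An alternating sequence of states and transitions, of (possibly infinite)
length `len` (= number of transitions); the states are `state 0, …, state len`. -/
structure Run (P T : Type) where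
  len : ℕ∞
  state : ℕ → Set P
  trans : ℕ → T

/-- A finite alternating sequence of states and transitions (a history):
states `state 0, …, state len` and transitions `trans 0, …, trans (len-1)`. -/
structure Hist (P T : Type) where
  len : ℕ
  state : ℕ → Set P
  trans : ℕ → T

namespace PetriNet

variable {P T : Type} (N : PetriNet P T)

/-- The input places `•t` of a transition. -/
def inp (t : T) : Set P := {p | (p, t) ∈ N.flowPT}

/-- The output places `t•` of a transition. -/
def out (t : T) : Set P := {p | (t, p) ∈ N.flowTP}

/-- `t` is enabled in `s` iff `•t ⊆ s` and `t• ∩ s ⊆ •t`. -/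
def Enabled (s : Set P) (t : T) : Prop := N.inp t ⊆ s ∧ N.out t ∩ s ⊆ N.inp t

/-- The state obtained by firing `t` in `s`: `(s \ •t) ∪ t•`. -/
def fire (s : Set P) (t : T) : Set P := (s \ N.inp t) ∪ N.out t

/-- `s →t s'`: `t` is enabled at `s` and firing it yields `s'`. -/
def Step (s : Set P) (t : T) (s' : Set P) : Prop := N.Enabled s t ∧ s' = N.fire s t

/-- A state is a deadlock if no transition is enabled in it. -/
def Deadlock (s : Set P) : Prop := ∀ t, ¬ N.Enabled s t

/-- `r` starts at the initial state and follows the firing rule. -/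
def IsRun (r : Run P T) : Prop :=
  r.state 0 = N.s0 ∧
    ∀ i : ℕ, (i : ℕ∞) < r.len → N.Step (r.state i) (r.trans i) (r.state (i + 1))

/-- An execution: a maximal run (it is either infinite or ends in a deadlock). -/
def IsExec (r : Run P T) : Prop :=
  N.IsRun r ∧ ∀ n : ℕ, r.len = (n : ℕ∞) → N.Deadlock (r.state n)

/-- A run all of whose steps `(sᵢ, tᵢ₊₁)` lie in `I`. -/
def IsRunRestr (I : Set (Set P × T)) (r : Run P T) : Prop :=
  N.IsRun r ∧ ∀ i : ℕ, (i : ℕ∞) < r.len → (r.state i, r.trans i) ∈ I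

/-- An `I`-restricted execution: a maximal `I`-respecting run (it is either
infinite or ends in a state from which no enabled transition respects `I`). -/
def IsExecRestr (I : Set (Set P × T)) (r : Run P T) : Prop :=
  N.IsRunRestr I r ∧ ∀ n : ℕ, r.len = (n : ℕ∞) →
    ¬ ∃ t, N.Enabled (r.state n) t ∧ (r.state n, t) ∈ I

end PetriNet

namespace Run

variable {P T : Type}

/-- State `s` occurs on the run `r`. -/
def Mem (r : Run P T) (s : Set P) : Prop := ∃ i : ℕ, (i : ℕ∞) ≤ r.len ∧ s = r.state i

/-- `r` is a prefix of `r'`. -/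
def IsPrefix (r r' : Run P T) : Prop :=
  r.len ≤ r'.len ∧ (∀ i : ℕ, (i : ℕ∞) ≤ r.len → r.state i = r'.state i) ∧
    ∀ i : ℕ, (i : ℕ∞) < r.len → r.trans i = r'.trans i

end Run

namespace PetriNet

variable {P T : Type} (N : PetriNet P T)

/-- `reach(N)`: the states occurring on executions of `N`. -/
def reach : Set (Set P) := {s | ∃ r : Run P T, N.IsExec r ∧ r.Mem s}

/-- `reach_I(N)`: the states occurring on `I`-restricted executions of `N`. -/
def reachRestr (I : Set (Set P × T)) : Set (Set P) :=
  {s | ∃ r : Run P T, N.IsExecRestr I r ∧ r.Mem s}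

/-- The neighborhood of a set of processes (a process is a subset of `T`). -/
def ngb (Pi : Set (Set T)) : Set P := ⋃ π ∈ Pi, ⋃ t ∈ π, (N.inp t ∪ N.out t)

/-- The places owned by `Pi`, relative to the covering set `C` of processes. -/
def own (C Pi : Set (Set T)) : Set P := N.ngb Pi \ N.ngb (C \ Pi)

/-- The local information `s⌈_Π = s ∩ ngb(Π)`. -/
def locInfo (Pi : Set (Set T)) (s : Set P) : Set P := s ∩ N.ngb Pi

/-- The local state `s⌊_Π = s ∩ own(Π)`. -/
def locState (C Pi : Set (Set T)) (s : Set P) : Set P := s ∩ N.own C Pi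

/-- Weak knowledge `K^w_Π ψ` at `s`, relative to the reachable states. -/
def Kw (Pi : Set (Set T)) (ψ : Set P → Prop) (s : Set P) : Prop :=
  ∀ s' ∈ N.reach, N.locInfo Pi s' = N.locInfo Pi s → ψ s'

/-- Strong knowledge `K^s_Π ψ` at `s`, relative to the reachable states. -/
def Ks (C Pi : Set (Set T)) (ψ : Set P → Prop) (s : Set P) : Prop :=
  ∀ s' ∈ N.reach, N.locState C Pi s' = N.locState C Pi s → ψ s'

/-- One step of the attractor (for invariant `I` and uncontrollable
transitions `uc`): `s ∈ attr(A)` iff `s ∈ A`, or some enabled uncontrollable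
transition leads into `A` or violates `I`, or `s` is no deadlock and every
enabled `I`-respecting transition leads into `A`. -/
def attr (I : Set (Set P × T)) (uc : Set T) (A : Set (Set P)) : Set (Set P) :=
  {s | s ∈ A ∨
       (∃ t ∈ uc, N.Enabled s t ∧ (N.fire s t ∈ A ∨ (s, t) ∉ I)) ∨
       (¬ N.Deadlock s ∧ ∀ t, N.Enabled s t → (s, t) ∈ I → N.fire s t ∈ A)}

/-- `attr*(∅)`: the least fixpoint of `attr`, obtained by iterating from `∅`. -/
def attrStar (I : Set (Set P × T)) (uc : Set T) : Set (Set P) :=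
  ⋃ n : ℕ, (N.attr I uc)^[n] ∅

/-- `I_G = {(s,t) ∈ I | s →t s' and s' ∉ attr*(∅)}`. -/
def IG (I : Set (Set P × T)) (uc : Set T) : Set (Set P × T) :=
  {p ∈ I | N.Enabled p.1 p.2 ∧ N.fire p.1 p.2 ∉ N.attrStar I uc}

/-- The good states: `G = reach_{I_G}(N)` if `s0 ∉ attr*(∅)`, else `G = ∅`. -/
def good (I : Set (Set P × T)) (uc : Set T) : Set (Set P) :=
  {s | N.s0 ∉ N.attrStar I uc ∧ s ∈ N.reachRestr (N.IG I uc)}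

/-- The safe transition relation `R = {(s,t) ∈ I | ∃ s', s →t s' ∧ s, s' ∈ G}`. -/
def safeRel (I : Set (Set P × T)) (uc : Set T) : Set (Set P × T) :=
  {p ∈ I | ∃ s', N.Step p.1 p.2 s' ∧ p.1 ∈ N.good I uc ∧ s' ∈ N.good I uc}

/-- The support function on joint local states `q = (l, Π)`:
`supp(q) = ⋂_{(s,C) ⊒ q} {t | (s,t) ∈ R}`, i.e. the transitions allowed by `R`
from every good global state subsuming `q`. -/
def supp (I : Set (Set P × T)) (uc : Set T) (C : Set (Set T))
    (q : Set P × Set (Set T)) : Set T :=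
  {t | ∀ s ∈ N.good I uc, N.locState C q.2 s = q.1 → (s, t) ∈ N.safeRel I uc}

/-- The set `L` of joint local states `(s⌊_Π, Π)` for `s ∈ G`, `Π ⊆ C`. -/
def jointLoc (I : Set (Set P × T)) (uc : Set T) (C : Set (Set T)) :
    Set (Set P × Set (Set T)) :=
  {q | ∃ s ∈ N.good I uc, ∃ Pi, Pi ⊆ C ∧ q = (N.locState C Pi s, Pi)}

/-- `q ⊑ q'`: both arise from the same good global state `s` and the process
set of `q` is included in that of `q'`. -/
def Subsumed (I : Set (Set P × T)) (uc : Set T) (C : Set (Set T))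
    (q q' : Set P × Set (Set T)) : Prop :=
  ∃ s ∈ N.good I uc, q.2 ⊆ q'.2 ∧ q'.2 ⊆ C ∧
    q = (N.locState C q.2 s, q.2) ∧ q' = (N.locState C q'.2 s, q'.2)

/-- `vis(π) = {t | (•t ∪ t•) ∩ ngb(π) ≠ ∅}`. -/
def vis (π : Set T) : Set T := {t | (N.inp t ∪ N.out t) ∩ N.ngb {π} ≠ ∅}

open Classical in
/-- The projection of a transition sequence onto the transitions visible to `π`. -/
noncomputable def projVis (π : Set T) : List T → List T
  | [] => []
  | t :: l => if t ∈ N.vis π then t :: projVis π l else projVis π l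

/-- `h` is a history: a finite prefix of an execution of `N`. -/
def IsHist (h : Hist P T) : Prop :=
  h.state 0 = N.s0 ∧ ∀ i < h.len, N.Step (h.state i) (h.trans i) (h.state (i + 1))

end PetriNet

namespace Hist

variable {P T : Type}

/-- The sequence of transitions of a history. -/
def transList (h : Hist P T) : List T := (List.range h.len).map h.trans

/-- The last state of a history. -/
def last (h : Hist P T) : Set P := h.state h.len

end Hist

namespace PetriNet

variable {P T : Type} (N : PetriNet P T)

theorem mem_ngb_singleton {π : Set T} {t : T} (ht : t ∈ π) {p : P}
    (hp : p ∈ N.inp t ∪ N.out t) : p ∈ N.ngb {π} := by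
  simp only [ngb, Set.mem_iUnion]
  exact ⟨π, rfl, t, ht, hp⟩

theorem enabled_of_locInfo_eq {π : Set T} {t : T} (ht : t ∈ π) {s s' : Set P}
    (h : N.locInfo {π} s' = N.locInfo {π} s) (he : N.Enabled s t) : N.Enabled s' t := by
  have key : ∀ p ∈ N.inp t ∪ N.out t, (p ∈ s' ↔ p ∈ s) := by
    intro p hp
    have hn := N.mem_ngb_singleton ht hp
    have hiff : p ∈ N.locInfo {π} s' ↔ p ∈ N.locInfo {π} s := by rw [h]
    simpa [locInfo, hn] using hiff
  exact ⟨fun p hp => (key p (Or.inl hp)).2 (he.1 hp),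
    fun p hp => he.2 ⟨hp.1, (key p (Or.inr hp.1)).1 hp.2⟩⟩

theorem not_mem_attrStar_of_good {I : Set (Set P × T)} {uc : Set T} {s : Set P}
    (hs : s ∈ N.good I uc) : s ∉ N.attrStar I uc := by
  obtain ⟨h0, r, ⟨⟨⟨hr0, hstep⟩, hJ⟩, -⟩, i, hi, rfl⟩ := hs
  cases i with
  | zero => rwa [hr0]
  | succ k =>
    have hk : (k : ℕ∞) < r.len := lt_of_lt_of_le (by exact_mod_cast Nat.lt_succ_self k) hi
    rw [(hstep k hk).2]
    exact (hJ k hk).2.2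

theorem mem_IG_of_uncontrollable {I : Set (Set P × T)} {uc : Set T} {s : Set P} {t : T}
    (hs : s ∉ N.attrStar I uc) (ht : t ∈ uc) (he : N.Enabled s t) : (s, t) ∈ N.IG I uc := by
  simp only [attrStar, Set.mem_iUnion, not_exists] at hs
  refine ⟨?_, he, ?_⟩
  · by_contra hI
    exact hs 1 (Or.inr (Or.inl ⟨t, ht, he, Or.inr hI⟩))
  · intro hf
    obtain ⟨n, hn⟩ := Set.mem_iUnion.1 hf
    apply hs (n + 1)
    rw [Function.iterate_succ_apply']
    exact Or.inr (Or.inl ⟨t, ht, he, Or.inl hn⟩)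

/-- The states visited from `N.s0` when the transition fired at time `j` in state `s`
is `c j s`, regardless of enabledness. -/
def follow (c : ℕ → Set P → T) : ℕ → Set P
  | 0 => N.s0
  | j + 1 => N.fire (follow c j) (c j (follow c j))

/-- Reachability by maximal restricted runs is closed under restricted steps: keep the run up to
`s`, fire `t`, then go on firing admissible transitions for as long as there are any. -/
theorem fire_mem_reachRestr {J : Set (Set P × T)} {s : Set P} {t : T}
    (hs : s ∈ N.reachRestr J) (he : N.Enabled s t) (hJ : (s, t) ∈ J) :
    N.fire s t ∈ N.reachRestr J := by
  classical
  obtain ⟨r, ⟨⟨⟨hr0, hstep⟩, hrJ⟩, -⟩, i, hi, rfl⟩ := hs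
  let c : ℕ → Set P → T := fun j u =>
    if j < i then r.trans j else if j = i then t
    else if h : ∃ t', N.Enabled u t' ∧ (u, t') ∈ J then h.choose else t
  have hpre : ∀ j ≤ i, N.follow c j = r.state j := by
    intro j
    induction j with
    | zero => intro _; exact hr0.symm
    | succ k ih =>
      intro hk
      have hk' : (k : ℕ∞) < r.len := lt_of_lt_of_le (by exact_mod_cast hk) hi
      have hc : c k (r.state k) = r.trans k := if_pos hk
      rw [(hstep k hk').2, follow, ih (by omega), hc]
  have hci : ∀ u, c i u = t := fun u => by simp [c]
  have hnext : N.follow c (i + 1) = N.fire (r.state i) t := by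
    rw [follow, hpre i le_rfl, hci]
  -- The new run stops at the first time after `i` at which no admissible transition is left.
  let stuck : ℕ → Prop := fun n =>
    i + 1 ≤ n ∧ ¬ ∃ t', N.Enabled (N.follow c n) t' ∧ (N.follow c n, t') ∈ J
  have hgood : ∀ j, (∀ n ≤ j, ¬ stuck n) →
      N.Enabled (N.follow c j) (c j (N.follow c j)) ∧
        (N.follow c j, c j (N.follow c j)) ∈ J := by
    intro j hj
    rcases lt_trichotomy j i with h | rfl | h
    · have hj' : (j : ℕ∞) < r.len := lt_of_lt_of_le (by exact_mod_cast h) hi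
      have hc : c j (r.state j) = r.trans j := if_pos h
      rw [hpre j h.le, hc]
      exact ⟨(hstep j hj').1, hrJ j hj'⟩
    · rw [hci, hpre j le_rfl]
      exact ⟨he, hJ⟩
    · have hex : ∃ t', N.Enabled (N.follow c j) t' ∧ (N.follow c j, t') ∈ J := by
        by_contra hne
        exact hj j le_rfl ⟨h, hne⟩
      have hc : c j (N.follow c j) = hex.choose := by
        simp only [c]
        rw [if_neg (by omega), if_neg (by omega), dif_pos hex]
      rw [hc]
      exact hex.choose_spec
  by_cases hst : ∃ n, stuck n
  · have hlt : ∀ j : ℕ, (j : ℕ∞) < (Nat.find hst : ℕ∞) → ∀ n ≤ j, ¬ stuck n := by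
      intro j hj n hn
      exact Nat.find_min hst (lt_of_le_of_lt hn (by exact_mod_cast hj))
    refine ⟨⟨(Nat.find hst : ℕ), N.follow c, fun j => c j (N.follow c j)⟩,
      ⟨⟨⟨rfl, fun j hj => ⟨(hgood j (hlt j hj)).1, rfl⟩⟩,
        fun j hj => (hgood j (hlt j hj)).2⟩, ?_⟩, i + 1, ?_, hnext.symm⟩
    · intro n hn
      have hn' : Nat.find hst = n := Nat.cast_injective (R := ℕ∞) hn
      exact hn' ▸ (Nat.find_spec hst).2
    · exact Nat.cast_le (α := ℕ∞).2 (Nat.find_spec hst).1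
  · have hno : ∀ j : ℕ, ∀ n ≤ j, ¬ stuck n := fun _ n _ hn => hst ⟨n, hn⟩
    exact ⟨⟨⊤, N.follow c, fun j => c j (N.follow c j)⟩,
      ⟨⟨⟨rfl, fun j _ => ⟨(hgood j (hno j)).1, rfl⟩⟩, fun j _ => (hgood j (hno j)).2⟩,
        fun n hn => absurd hn (ENat.top_ne_natCast n)⟩, i + 1, le_top, hnext.symm⟩

end PetriNet

/-- enabled uncontrollable transitions are always known to be
safe: if `t ∈ π ∩ uc(T)`, `s ∈ G` and `(s,t) ∈ R`, then `π` weakly knows at `s`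
(relative to the good states `G`) that `t` is allowed by `R`. -/
theorem uncontrollable_weakly_known_safe {P T : Type} [Fintype P] [Fintype T]
    (N : PetriNet P T) (I : Set (Set P × T)) (uc : Set T)
    (C : Set (Set T)) (hC : ⋃₀ C = (Set.univ : Set T))
    (π : Set T) (hπ : π ∈ C) (t : T) (ht : t ∈ π) (htu : t ∈ uc)
    (s : Set P) (hs : s ∈ N.good I uc) (hR : (s, t) ∈ N.safeRel I uc) :
    ∀ s' ∈ N.good I uc, N.locInfo {π} s' = N.locInfo {π} s →
      (s', t) ∈ N.safeRel I uc := by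
  intro s' hs' hloc
  obtain ⟨-, _, hst, -, -⟩ := hR
  have he := N.enabled_of_locInfo_eq ht hloc hst.1
  have hIG := N.mem_IG_of_uncontrollable (N.not_mem_attrStar_of_good hs') htu he
  exact ⟨hIG.1, _, ⟨he, rfl⟩, hs', hs'.1, N.fire_mem_reachRestr hs'.2 he hIG⟩
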